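/- arXiv:1911.12432 — 2 statements merged into one kernel-verified Lean document; each statement's English description precedes it below -/
import Mathlib

section
/- Let x ∈ ℚ₊^E be a feasible solution of LP1, θ > 0, and suppose there is an order of the edges that is θ-flat with respect to x. Then there exist d-distance matchings M₁,…,M_q and rational coefficients λ₁,…,λ_q ≥ 0 such that Σ_{i=1}^q λᵢ·χ_{Mᵢ} = x and Σ_{i=1}^q λᵢ ≤ θ, where χ_{Mᵢ} ∈ {0,1}^E is the characteristic vector of Mᵢ. -/
open Finset

/-- `M` is a `d`-distance matching of the bipartite graph with left node set `Fin n`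
(ordered) and right node set `T`, whose edge set is `E`. -/
def DDM {n : ℕ} {T : Type*} [DecidableEq T] (d : ℕ) (E M : Finset (Fin n × T)) : Prop :=
  M ⊆ E ∧ (∀ e ∈ M, ∀ f ∈ M, e.1 = f.1 → e = f) ∧
    (∀ e ∈ M, ∀ f ∈ M, e.2 = f.2 → e ≠ f → d ≤ Nat.dist e.1.val f.1.val)

/-- `x` is a feasible solution of LP1. -/
def FeasLP1 {n : ℕ} {T : Type*} [DecidableEq T]
    (d : ℕ) (E : Finset (Fin n × T)) (x : Fin n × T → ℚ) : Prop :=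
  (∀ e, 0 ≤ x e) ∧ (∀ e ∉ E, x e = 0) ∧
  (∀ s : Fin n, ∑ e ∈ E.filter (fun e => e.1 = s), x e ≤ 1) ∧
  (∀ s : Fin n, ∀ t : T,
    ∑ e ∈ E.filter (fun e => e.2 = t ∧ s.val ≤ e.1.val ∧ e.1.val < s.val + d), x e ≤ 1)

/-- The list `l` of edges is a `θ`-flat order with respect to `x`. -/
def IsFlatOrder {n : ℕ} {T : Type*} [DecidableEq T]
    (d : ℕ) (θ : ℚ) (x : Fin n × T → ℚ) (l : List (Fin n × T)) : Prop :=
  ∀ i : Fin l.length,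
    (∑ j ∈ Finset.univ.filter
        (fun j : Fin l.length => i < j ∧ (l.get j).1 = (l.get i).1), x (l.get j)) +
    (∑ j ∈ Finset.univ.filter
        (fun j : Fin l.length => i < j ∧ (l.get j).2 = (l.get i).2 ∧
          Nat.dist (l.get j).1.val (l.get i).1.val < d), x (l.get j))
    ≤ θ - x (l.get i)

/-!
Call two distinct edges conflicting if no `d`-distance matching contains both; then `d`-distance
matchings are the independent sets of the conflict graph, and a decomposition of `x` is a fractional
coloring of that graph. Such a coloring, of total weight `θ`, is built greedily from the last edge
of the order back to the first. When the edge `a` is reached, the independent sets blocked for `a`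
contain one of its later neighbours, so their total weight is at most the sum of `x` over these
neighbours, which flatness bounds by `θ - x a`. Hence the sets that `a` can join have total weight
at least `x a`, and `a` is added to a portion of them of weight exactly `x a`.
-/

section FractionalColoring

variable {V K : Type*} [DecidableEq V] {G : SimpleGraph V} {x : V → K} {A : Finset V} {θ : K}
  {w g : Finset V → K} {a : V}

section OrderedRing

variable [Ring K]

/-- The weighting obtained from `w` by moving, for each `M` not containing `a`, the portion `g M` of
the weight of `M` to `insert a M`. -/
def moveWeight (a : V) (w g : Finset V → K) (M : Finset V) : K :=
  if a ∈ M then g (M.erase a) else w M - g M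

lemma sum_powerset_insert_moveWeight_mul (ha : a ∉ A) (f : Finset V → K) :
    ∑ M ∈ (insert a A).powerset, moveWeight a w g M * f M =
      ∑ M ∈ A.powerset, ((w M - g M) * f M + g M * f (insert a M)) := by
  rw [sum_powerset_insert ha, ← sum_add_distrib]
  refine sum_congr rfl fun M hM => ?_
  have haM : a ∉ M := fun h => ha (mem_powerset.mp hM h)
  simp only [moveWeight, haM, mem_insert_self, if_true, if_false, erase_insert haM]

variable [PartialOrder K]

/-- `w` is a fractional coloring, of total weight `θ`, of the subgraph of `G` induced on `A` with
demands `x`: it weights the independent subsets of `A` so that those containing `v` have total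
weight `x v`. Outside the powerset of `A`, only the sign of the values of `w` is constrained. -/
structure IsFractionalColoring (G : SimpleGraph V) (x : V → K) (A : Finset V) (θ : K)
    (w : Finset V → K) : Prop where
  nonneg : 0 ≤ w
  isIndepSet : ∀ M ⊆ A, w M ≠ 0 → G.IsIndepSet M
  sum_mem : ∀ v ∈ A, ∑ M ∈ A.powerset, w M * (if v ∈ M then 1 else 0) = x v
  sum_eq : ∑ M ∈ A.powerset, w M = θ

lemma isFractionalColoring_empty (hθ : 0 ≤ θ) : IsFractionalColoring G x ∅ θ fun _ => θ where
  nonneg _ := hθ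
  isIndepSet M hM _ := by simp [subset_empty.mp hM]
  sum_mem := by simp
  sum_eq := by simp

lemma IsFractionalColoring.exists_fin_family (hw : IsFractionalColoring G x A θ w) :
    ∃ (q : ℕ) (Ms : Fin q → Finset V) (lam : Fin q → K),
      (∀ i, Ms i ⊆ A ∧ G.IsIndepSet (Ms i)) ∧ (∀ i, 0 ≤ lam i) ∧
      (∀ v ∈ A, ∑ i, lam i * (if v ∈ Ms i then 1 else 0) = x v) ∧ ∑ i, lam i = θ := by
  classical
  let support : Finset (Finset V) := {M ∈ A.powerset | w M ≠ 0}
  let Ms (i : Fin #support) : Finset V := support.equivFin.symm i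
  have hMs (i) : Ms i ⊆ A ∧ w (Ms i) ≠ 0 := by
    simpa only [support, mem_filter, mem_powerset] using (support.equivFin.symm i).2
  have sum_fin (f : Finset V → K) (hf : ∀ M, w M = 0 → f M = 0) :
      ∑ i, f (Ms i) = ∑ M ∈ A.powerset, f M := by
    rw [support.equivFin.symm.sum_comp fun M => f M, sum_coe_sort support f]
    exact sum_filter_of_ne fun M _ hne h => hne (hf M h)
  refine ⟨_, Ms, fun i => w (Ms i), fun i => ⟨(hMs i).1, hw.isIndepSet _ (hMs i).1 (hMs i).2⟩,
    fun i => hw.nonneg _, fun v hv => ?_, ?_⟩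
  · rw [← hw.sum_mem v hv]
    exact sum_fin (fun M => w M * (if v ∈ M then 1 else 0)) fun M hM => by simp [hM]
  · rw [← hw.sum_eq]
    exact sum_fin w fun _ => id

variable [IsOrderedRing K]

lemma moveWeight_nonneg (hg : 0 ≤ g) (hgw : g ≤ w) : 0 ≤ moveWeight a w g := by
  intro M
  unfold moveWeight
  split_ifs
  · exact hg (M.erase a)
  · exact sub_nonneg.mpr (hgw M)

lemma IsFractionalColoring.insert_moveWeight (hw : IsFractionalColoring G x A θ w) (ha : a ∉ A)
    (hg : 0 ≤ g) (hgw : g ≤ w) (hfree : ∀ M ⊆ A, g M ≠ 0 → ∀ u ∈ M, ¬ G.Adj a u)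
    (hsum : ∑ M ∈ A.powerset, g M = x a) :
    IsFractionalColoring G x (insert a A) θ (moveWeight a w g) where
  nonneg := moveWeight_nonneg hg hgw
  isIndepSet M hM hne := by
    have hw_ne {N : Finset V} (hN : g N ≠ 0) : w N ≠ 0 :=
      fun h => hN (le_antisymm (h ▸ hgw N) (hg N))
    unfold moveWeight at hne
    split_ifs at hne with haM
    · have hMA : M.erase a ⊆ A := subset_insert_iff.mp hM
      rw [← insert_erase haM, coe_insert]
      refine (hw.isIndepSet _ hMA (hw_ne hne)).insert fun u hu _ => ?_
      have hau := hfree _ hMA hne u hu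
      exact ⟨hau, fun h => hau h.symm⟩
    · refine hw.isIndepSet M ((subset_insert_iff_of_notMem haM).mp hM) fun h => hne ?_
      rw [h, not_ne_iff.mp fun hN => hw_ne hN h, sub_zero]
  sum_mem v hv := by
    rw [sum_powerset_insert_moveWeight_mul ha]
    obtain rfl | hva := eq_or_ne v a
    · rw [← hsum]
      refine sum_congr rfl fun M hM => ?_
      have hvM : v ∉ M := fun h => ha (mem_powerset.mp hM h)
      simp [hvM]
    · rw [← hw.sum_mem v (mem_of_mem_insert_of_ne hv hva)]
      refine sum_congr rfl fun M _ => ?_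
      simp only [mem_insert, hva, false_or]
      rw [← add_mul, sub_add_cancel]
  sum_eq := by
    simpa [hw.sum_eq] using sum_powerset_insert_moveWeight_mul (w := w) (g := g) ha 1

lemma IsFractionalColoring.sum_blocked_le (hw : IsFractionalColoring G x A θ w)
    [DecidableRel G.Adj] (a : V) :
    ∑ M ∈ A.powerset with ∃ u ∈ M, G.Adj a u, w M ≤ ∑ u ∈ A with G.Adj a u, x u := by
  have hterm_nonneg (M : Finset V) (u : V) : 0 ≤ w M * (if u ∈ M then 1 else 0) :=
    mul_nonneg (hw.nonneg M) (by split_ifs <;> simp)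
  calc ∑ M ∈ A.powerset with ∃ u ∈ M, G.Adj a u, w M
      ≤ ∑ M ∈ A.powerset with ∃ u ∈ M, G.Adj a u,
          ∑ u ∈ A with G.Adj a u, w M * (if u ∈ M then 1 else 0) := by
        refine sum_le_sum fun M hM => ?_
        rw [mem_filter, mem_powerset] at hM
        obtain ⟨hMA, u, huM, hau⟩ := hM
        simpa [huM] using single_le_sum (fun u _ => hterm_nonneg M u)
          (mem_filter.mpr ⟨hMA huM, hau⟩)
    _ ≤ ∑ M ∈ A.powerset, ∑ u ∈ A with G.Adj a u, w M * (if u ∈ M then 1 else 0) :=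
        sum_le_sum_of_subset_of_nonneg (filter_subset _ _)
          fun M _ _ => sum_nonneg fun u _ => hterm_nonneg M u
    _ = ∑ u ∈ A with G.Adj a u, x u := by
        rw [sum_comm]
        exact sum_congr rfl fun u hu => hw.sum_mem u (mem_filter.mp hu).1

end OrderedRing

section OrderedField

variable [Field K] [LinearOrder K] [IsStrictOrderedRing K]

lemma exists_le_sum_eq {ι : Type*} {s : Finset ι} {f : ι → K} {y : K}
    (hf : 0 ≤ f) (hy : 0 ≤ y) (hys : y ≤ ∑ i ∈ s, f i) :
    ∃ g : ι → K, 0 ≤ g ∧ g ≤ f ∧ (∀ i ∉ s, g i = 0) ∧ ∑ i ∈ s, g i = y := by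
  classical
  have hratio_nonneg : 0 ≤ y / ∑ i ∈ s, f i := div_nonneg hy (hy.trans hys)
  have hratio_le_one : y / ∑ i ∈ s, f i ≤ 1 := div_le_one_of_le₀ hys (hy.trans hys)
  refine ⟨fun i => if i ∈ s then y / (∑ i ∈ s, f i) * f i else 0, fun i => ?_, fun i => ?_,
    fun i hi => if_neg hi, ?_⟩
  · exact ite_nonneg (mul_nonneg hratio_nonneg (hf i)) le_rfl
  · dsimp only
    split_ifs
    · exact mul_le_of_le_one_left (hf i) hratio_le_one
    · exact hf i
  · rw [sum_congr rfl fun i hi => if_pos hi, ← mul_sum]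
    -- If the total is `0`, then so is `y`, and the ratio has the junk value `0 / 0 = 0`.
    exact div_mul_cancel_of_imp fun h => le_antisymm (h ▸ hys) hy

lemma IsFractionalColoring.exists_insert (hw : IsFractionalColoring G x A θ w)
    [DecidableRel G.Adj] (ha : a ∉ A) (hxa : 0 ≤ x a)
    (hθ : x a + ∑ u ∈ A with G.Adj a u, x u ≤ θ) :
    ∃ w', IsFractionalColoring G x (insert a A) θ w' := by
  have hfree : x a ≤ ∑ M ∈ A.powerset with ¬ ∃ u ∈ M, G.Adj a u, w M := by
    have hsplit := sum_filter_add_sum_filter_not A.powerset (fun M => ∃ u ∈ M, G.Adj a u) w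
    linarith [hw.sum_blocked_le a, hw.sum_eq]
  obtain ⟨g, hg, hgw, hg_zero, hg_sum⟩ := exists_le_sum_eq hw.nonneg hxa hfree
  refine ⟨_, hw.insert_moveWeight ha hg hgw (fun M _ hne u hu hau => hne ?_) ?_⟩
  · exact hg_zero M fun hM => (mem_filter.mp hM).2 ⟨u, hu, hau⟩
  · rw [← hg_sum]
    exact (sum_subset (filter_subset _ _) fun M _ hM => hg_zero M hM).symm

end OrderedField

end FractionalColoring

theorem exists_isFractionalColoring_of_flat {V K : Type*} [LinearOrder V] [Field K] [LinearOrder K]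
    [IsStrictOrderedRing K] {G : SimpleGraph V} [DecidableRel G.Adj] {x : V → K} {A : Finset V}
    {θ : K} (hθ : 0 ≤ θ) (hx : ∀ v ∈ A, 0 ≤ x v)
    (hflat : ∀ v ∈ A, x v + ∑ u ∈ A with v < u ∧ G.Adj v u, x u ≤ θ) :
    ∃ w, IsFractionalColoring G x A θ w := by
  induction A using Finset.induction_on_min with
  | empty => exact ⟨_, isFractionalColoring_empty hθ⟩
  | insert a A hlt ih =>
    have ha : a ∉ A := fun h => (hlt a h).false
    obtain ⟨w, hw⟩ := ih (fun v hv => hx v (mem_insert_of_mem hv)) fun v hv => by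
      have hv_flat := hflat v (mem_insert_of_mem hv)
      rwa [filter_insert, if_neg fun h => (hlt v hv).asymm h.1] at hv_flat
    refine hw.exists_insert ha (hx a (mem_insert_self a A)) ?_
    have ha_flat := hflat a (mem_insert_self a A)
    rwa [filter_insert, if_neg fun h => h.1.false,
      filter_congr fun u hu => and_iff_right (hlt u hu)] at ha_flat

lemma sum_le_sum_add_sum_of_subset_union {ι K : Type*} [DecidableEq ι] [AddCommMonoid K]
    [PartialOrder K] [IsOrderedAddMonoid K] {s t u : Finset ι} {f : ι → K}
    (hf : ∀ i ∈ t ∪ u, 0 ≤ f i) (h : s ⊆ t ∪ u) :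
    ∑ i ∈ s, f i ≤ ∑ i ∈ t, f i + ∑ i ∈ u, f i :=
  calc ∑ i ∈ s, f i ≤ ∑ i ∈ t ∪ u, f i := sum_le_sum_of_subset_of_nonneg h fun i hi _ => hf i hi
    _ ≤ ∑ i ∈ t ∪ u, f i + ∑ i ∈ t ∩ u, f i := le_add_of_nonneg_right <| sum_nonneg fun i hi =>
        hf i (mem_union_left u (mem_of_mem_inter_left hi))
    _ = ∑ i ∈ t, f i + ∑ i ∈ u, f i := sum_union_inter

section DistanceMatching

variable {n : ℕ} {T : Type*} {d : ℕ}

/-- The conflict graph: its vertices are the pairs `(s, t)`, and two of them are adjacent when they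
cannot lie in a common `d`-distance matching. -/
def conflictGraph (n : ℕ) (T : Type*) (d : ℕ) : SimpleGraph (Fin n × T) where
  Adj e f := e ≠ f ∧ (e.1 = f.1 ∨ e.2 = f.2 ∧ Nat.dist e.1 f.1 < d)
  symm := ⟨fun e f h => by simpa only [ne_comm, eq_comm, Nat.dist_comm] using h⟩
  loopless := ⟨fun _ h => h.1 rfl⟩

variable [DecidableEq T]

lemma ddm_of_isIndepSet {E M : Finset (Fin n × T)} (hME : M ⊆ E)
    (hM : (conflictGraph n T d).IsIndepSet M) : DDM d E M := by
  refine ⟨hME, fun e he f hf hs => ?_, fun e he f hf ht hne => ?_⟩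
  · by_contra hne
    exact hM he hf hne ⟨hne, Or.inl hs⟩
  · by_contra! hlt
    exact hM he hf hne ⟨hne, Or.inr ⟨ht, hlt⟩⟩

lemma IsFlatOrder.add_sum_conflict_le {θ : ℚ} {x : Fin n × T → ℚ} {l : List (Fin n × T)}
    [DecidableRel (conflictGraph n T d).Adj]
    (hflat : IsFlatOrder d θ x l) (hx : ∀ e ∈ l, 0 ≤ x e) (i : Fin l.length) :
    x (l.get i) + ∑ j with i < j ∧ (conflictGraph n T d).Adj (l.get i) (l.get j), x (l.get j)
      ≤ θ := by
  have hsplit := sum_le_sum_add_sum_of_subset_union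
    (s := {j | i < j ∧ (conflictGraph n T d).Adj (l.get i) (l.get j)})
    (t := {j | i < j ∧ (l.get j).1 = (l.get i).1})
    (u := {j | i < j ∧ (l.get j).2 = (l.get i).2 ∧
      Nat.dist (l.get j).1.val (l.get i).1.val < d})
    (f := fun j => x (l.get j)) (fun j _ => hx _ (l.get_mem j)) fun j hj => by
      obtain ⟨hij, -, hs | ⟨ht, hdist⟩⟩ := (mem_filter.mp hj).2
      · exact mem_union_left _ (mem_filter.mpr ⟨mem_univ j, hij, hs.symm⟩)
      · rw [Nat.dist_comm] at hdist
        exact mem_union_right _ (mem_filter.mpr ⟨mem_univ j, hij, ht.symm, hdist⟩)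
  linarith [hflat i]

end DistanceMatching

theorem stmt7_general {n : ℕ} {T : Type*} [DecidableEq T] (d : ℕ) (E : Finset (Fin n × T))
    (x : Fin n × T → ℚ) (hx : ∀ e, 0 ≤ x e) (hxE : ∀ e ∉ E, x e = 0)
    (θ : ℚ) (hθ : 0 ≤ θ) (l : List (Fin n × T)) (hnd : l.Nodup)
    (hlE : l.toFinset = E) (hflat : IsFlatOrder d θ x l) :
    ∃ (q : ℕ) (Ms : Fin q → Finset (Fin n × T)) (lam : Fin q → ℚ),
      (∀ i, DDM d E (Ms i)) ∧ (∀ i, 0 ≤ lam i) ∧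
      (∀ e, ∑ i, lam i * (if e ∈ Ms i then 1 else 0) = x e) ∧
      ∑ i, lam i ≤ θ := by
  classical
  let edge : Fin l.length ↪ Fin n × T := ⟨l.get, List.nodup_iff_injective_get.mp hnd⟩
  have mem_E_iff (e) : e ∈ E ↔ ∃ i, edge i = e := by
    rw [← hlE, List.mem_toFinset, List.mem_iff_get]
    rfl
  obtain ⟨w, hw⟩ := exists_isFractionalColoring_of_flat (A := univ) (x := fun i => x (edge i))
    (G := (conflictGraph n T d).comap edge) hθ (fun i _ => hx _)
    fun i _ => hflat.add_sum_conflict_le (fun e _ => hx e) i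
  obtain ⟨q, Ms, lam, hMs, hlam, hcover, htotal⟩ := hw.exists_fin_family
  have hME (i) : (Ms i).map edge ⊆ E := fun e he => by
    obtain ⟨j, -, hj⟩ := mem_map.mp he
    exact (mem_E_iff e).mpr ⟨j, hj⟩
  refine ⟨q, fun i => (Ms i).map edge, lam, fun i => ddm_of_isIndepSet (hME i) ?_, hlam,
    fun e => ?_, htotal.le⟩
  · rw [coe_map]
    exact (edge.injective.injOn.pairwise_image).mpr (hMs i).2
  · by_cases he : e ∈ E
    · obtain ⟨j, rfl⟩ := (mem_E_iff e).mp he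
      simpa only [mem_map'] using hcover j (mem_univ j)
    · rw [hxE e he]
      exact sum_eq_zero fun i _ => by rw [if_neg fun h => he (hME i h), mul_zero]

/-- If `x` is a rational feasible solution of LP1 admitting a `θ`-flat order of the
edges, then `x` is a nonnegative combination `Σ λᵢ χ_{Mᵢ}` of characteristic vectors of
`d`-distance matchings with `Σ λᵢ ≤ θ`. -/
theorem stmt7 {n : ℕ} {T : Type*} [DecidableEq T]
    (d : ℕ) (hd : 1 ≤ d) (E : Finset (Fin n × T))
    (x : Fin n × T → ℚ) (hx : FeasLP1 d E x) (θ : ℚ) (hθ : 0 < θ)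
    (l : List (Fin n × T)) (hnd : l.Nodup) (hlE : l.toFinset = E)
    (hflat : IsFlatOrder d θ x l) :
    ∃ (q : ℕ) (Ms : Fin q → Finset (Fin n × T)) (lam : Fin q → ℚ),
      (∀ i, DDM d E (Ms i)) ∧ (∀ i, 0 ≤ lam i) ∧
      (∀ e, ∑ i, lam i * (if e ∈ Ms i then 1 else 0) = x e) ∧
      ∑ i, lam i ≤ θ := by
  exact stmt7_general d E x hx.1 hx.2.1 θ hθ.le l hnd hlE hflat
end

section
/- If d = |T|, then LP2 is integral: for every weight function w : E → ℝ, whenever LP2 is feasible it attains its optimum at an integral vector, so its optimum equals the maximum weight of a perfect d-distance matching. -/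
open Finset

/-- `M` is a perfect `d`-distance matching of the bipartite graph with left node set
`Fin n` (ordered) and right node set `T`, whose edge set is `E`: every node of `S` is
incident to exactly one edge of `M`, and edges at the same `T`-node are at distance at
least `d`. -/
def PerfectDDM {n : ℕ} {T : Type*} [DecidableEq T] (d : ℕ)
    (E M : Finset (Fin n × T)) : Prop :=
  M ⊆ E ∧ (∀ e ∈ M, ∀ f ∈ M, e.1 = f.1 → e = f) ∧
    (∀ e ∈ M, ∀ f ∈ M, e.2 = f.2 → e ≠ f → d ≤ Nat.dist e.1.val f.1.val) ∧
    (∀ i : Fin n, ∃ t, (i, t) ∈ M)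

/-- `x` is a feasible solution of LP2. -/
def FeasLP2 {n : ℕ} {T : Type*} [DecidableEq T]
    (d : ℕ) (E : Finset (Fin n × T)) (x : Fin n × T → ℝ) : Prop :=
  (∀ e, 0 ≤ x e) ∧ (∀ e ∉ E, x e = 0) ∧
  (∀ s : Fin n, ∑ e ∈ E.filter (fun e => e.1 = s), x e = 1) ∧
  (∀ s : Fin n, ∀ t : T,
    ∑ e ∈ E.filter (fun e => e.2 = t ∧ s.val ≤ e.1.val ∧ e.1.val < s.val + d), x e ≤ 1)

/-!
If `|T| ≤ d`, then `d` consecutive rows of a feasible `x` carry total mass `d`, while each of the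
`|T|` columns of such a window carries at most `1`, so every column of the window has sum exactly
`1`. Comparing two consecutive windows shows that `x` is `d`-periodic in the rows. Its first `d`
rows have row sums `1` and column sums at most `1`, so by Birkhoff's theorem (after completing them
to a doubly stochastic matrix) they are a convex combination of injections into `T`. Repeating these
injections periodically writes `x` as a convex combination of perfect `d`-distance matchings.
-/

section ConvexHull

variable {𝕜 α : Type*} [Field 𝕜] [LinearOrder 𝕜] [IsStrictOrderedRing 𝕜]

theorem mem_convexHull_support_subset {V : Set (α → 𝕜)} (hV : ∀ v ∈ V, 0 ≤ v) {x : α → 𝕜}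
    (hx : x ∈ convexHull 𝕜 V) : x ∈ convexHull 𝕜 {v ∈ V | v.support ⊆ x.support} := by
  obtain ⟨ι, _, v, c, hvV, -, hc_pos, hc_sum, hcv⟩ := eq_pos_convex_span_of_mem_convexHull hx
  have hv (i : ι) : v i ∈ V := hvV ⟨i, rfl⟩
  refine mem_convexHull_of_exists_fintype c v (fun i => (hc_pos i).le) hc_sum
    (fun i => ⟨hv i, fun a hva hxa => hva ?_⟩) hcv
  have hsum : ∑ j, c j * v j a = 0 := by simpa [← hcv] using hxa
  have hterm : c i * v i a = 0 := (sum_eq_zero_iff_of_nonneg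
    fun j _ => mul_nonneg (hc_pos j).le (hV _ (hv j) a)).1 hsum i (mem_univ i)
  exact (mul_eq_zero.1 hterm).resolve_left (hc_pos i).ne'

end ConvexHull

section IncidenceVector

variable (𝕜 : Type*) {α : Type*} [Semiring 𝕜]

/-- The incidence (characteristic) vector of `M`; for `M` a matching these are the integral points
of which feasible vectors are shown to be convex combinations. -/
noncomputable def incidenceVector (M : Finset α) : α → 𝕜 :=
  Set.indicator (M : Set α) 1

theorem incidenceVector_apply [DecidableEq α] (M : Finset α) (a : α) :
    incidenceVector 𝕜 M a = if a ∈ M then 1 else 0 := by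
  simp [incidenceVector, Set.indicator_apply]

theorem incidenceVector_nonneg [PartialOrder 𝕜] [ZeroLEOneClass 𝕜] (M : Finset α) :
    0 ≤ incidenceVector 𝕜 M :=
  Set.indicator_nonneg fun _ _ => zero_le_one

theorem support_incidenceVector [Nontrivial 𝕜] (M : Finset α) :
    (incidenceVector 𝕜 M).support = M := by
  simp [incidenceVector]

variable {𝕜}

theorem sum_mul_incidenceVector {E M : Finset α} (hME : M ⊆ E) (w : α → 𝕜) :
    ∑ e ∈ E, w e * incidenceVector 𝕜 M e = ∑ e ∈ M, w e := by
  classical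
  simp [incidenceVector_apply, sum_ite_mem, inter_eq_right.2 hME]

end IncidenceVector

section GraphFinset

variable {R S T : Type*} [Fintype R] [Fintype S] [Fintype T] [DecidableEq T]

/-- The graph of a function `f : R → T`, as a set of edges between `R` and `T`: this encodes the
matchings in which every node of `R` is incident to exactly one edge. -/
def graphFinset (f : R → T) : Finset (R × T) :=
  {e | f e.1 = e.2}

theorem mem_graphFinset {f : R → T} {e : R × T} : e ∈ graphFinset f ↔ f e.1 = e.2 := by
  simp [graphFinset]

theorem incidenceVector_graphFinset_apply (𝕜 : Type*) [Semiring 𝕜] (f : R → T) (e : R × T) :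
    incidenceVector 𝕜 (graphFinset f) e = if f e.1 = e.2 then 1 else 0 := by
  classical
  simp only [incidenceVector_apply, mem_graphFinset]

theorem funLeft_incidenceVector_graphFinset (𝕜 : Type*) [Semiring 𝕜] (ρ : S → R) (f : R → T) :
    LinearMap.funLeft 𝕜 𝕜 (Prod.map ρ id) (incidenceVector 𝕜 (graphFinset f)) =
      incidenceVector 𝕜 (graphFinset (f ∘ ρ)) := by
  ext e
  simp [LinearMap.funLeft_apply, incidenceVector_graphFinset_apply]

end GraphFinset

section FractionalMatching

variable {𝕜 R T : Type*} [Field 𝕜] [LinearOrder 𝕜] [Fintype R] [Fintype T]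

/-- `x` is a fractional matching of the complete bipartite graph between `R` and `T` that covers
every node of `R`. A block of at most `d` consecutive rows of a feasible vector of LP2 is one. -/
structure IsFractionalMatching (x : R × T → 𝕜) : Prop where
  nonneg : ∀ e, 0 ≤ x e
  row_sum : ∀ r, ∑ t, x (r, t) = 1
  col_sum_le : ∀ t, ∑ r, x (r, t) ≤ 1

namespace IsFractionalMatching

variable {x : R × T → 𝕜}

theorem sum_col_sum (hx : IsFractionalMatching x) : ∑ t, ∑ r, x (r, t) = Fintype.card R := by
  rw [sum_comm]
  simp [hx.row_sum]

variable [IsStrictOrderedRing 𝕜]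

theorem card_le (hx : IsFractionalMatching x) : Fintype.card R ≤ Fintype.card T := by
  have h : (Fintype.card R : 𝕜) ≤ ∑ _t : T, 1 :=
    hx.sum_col_sum ▸ sum_le_sum fun t _ => hx.col_sum_le t
  simpa using h

theorem col_sum_eq_one (hx : IsFractionalMatching x) (hcard : Fintype.card T ≤ Fintype.card R)
    (t : T) : ∑ r, x (r, t) = 1 := by
  have htotal : ∑ t, ∑ r, x (r, t) = ∑ _t : T, 1 := by
    simp [hx.sum_col_sum, hx.card_le.antisymm hcard]
  exact (sum_eq_sum_iff_of_le fun t _ => hx.col_sum_le t).1 htotal t (mem_univ t)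

theorem exists_doublyStochastic_extension [DecidableEq T] (hx : IsFractionalMatching x) :
    ∃ ι : R ↪ T, ∃ Y ∈ doublyStochastic 𝕜 T, ∀ r t, Y (ι r) t = x (r, t) := by
  obtain ⟨k, hk⟩ := Nat.exists_eq_add_of_le hx.card_le
  obtain ⟨φ⟩ : Nonempty (R ⊕ Fin k ≃ T) := Fintype.card_eq.1 (by simp [hk])
  let slack (t : T) : 𝕜 := 1 - ∑ r, x (r, t)
  have slack_nonneg (t : T) : 0 ≤ slack t := sub_nonneg.2 (hx.col_sum_le t)
  have sum_slack : ∑ t, slack t = k := by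
    simp [slack, sum_sub_distrib, hx.sum_col_sum, hk]
  have slack_eq (t : T) : k * (slack t / k) = slack t := by
    rcases eq_or_ne k 0 with rfl | hk0
    · simp [slack, hx.col_sum_eq_one hk.le t]
    · exact mul_div_cancel₀ _ (Nat.cast_ne_zero.2 hk0)
  -- The `|T| - |R|` missing rows are all equal, sharing out the slack of each column evenly.
  let Z : R ⊕ Fin k → T → 𝕜 := Sum.elim (fun r t => x (r, t)) (fun _ t => slack t / k)
  refine ⟨⟨φ ∘ Sum.inl, φ.injective.comp Sum.inl_injective⟩, .of fun t' => Z (φ.symm t'), ?_,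
    by simp [Z]⟩
  rw [mem_doublyStochastic_iff_sum]
  refine ⟨fun t' t => ?_, fun t' => ?_, fun t => ?_⟩
  · rcases h : φ.symm t' with r | i
    · simpa [Z, h] using hx.nonneg (r, t)
    · simpa [Z, h] using div_nonneg (slack_nonneg t) k.cast_nonneg
  · rcases h : φ.symm t' with r | i
    · simpa [Z, h] using hx.row_sum r
    · have hk0 : (k : 𝕜) ≠ 0 := Nat.cast_ne_zero.2 i.pos.ne'
      simp [Z, h, ← sum_div, sum_slack, hk0]
  · calc ∑ t', Z (φ.symm t') t = ∑ i, Z i t := Equiv.sum_comp φ.symm fun i => Z i t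
      _ = ∑ r, x (r, t) + k * (slack t / k) := by simp [Z]
      _ = 1 := by rw [slack_eq, add_sub_cancel]

theorem mem_convexHull_embedding [DecidableEq T] (hx : IsFractionalMatching x) :
    x ∈ convexHull 𝕜 (Set.range fun f : R ↪ T => incidenceVector 𝕜 (graphFinset f)) := by
  obtain ⟨ι, Y, hY, hYx⟩ := hx.exists_doublyStochastic_extension
  let restrict : Matrix T T 𝕜 →ₗ[𝕜] R × T → 𝕜 :=
    { toFun := fun A e => A (ι e.1) e.2
      map_add' := fun _ _ => rfl
      map_smul' := fun _ _ => rfl }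
  have hxY : restrict Y = x := funext fun e => hYx e.1 e.2
  rw [← SetLike.mem_coe, doublyStochastic_eq_convexHull_permMatrix] at hY
  have hmem := Set.mem_image_of_mem restrict hY
  rw [hxY, LinearMap.image_convexHull] at hmem
  refine convexHull_mono ?_ hmem
  rintro _ ⟨_, ⟨σ, rfl⟩, rfl⟩
  refine ⟨ι.trans σ.toEmbedding, funext fun e => ?_⟩
  change _ = σ.permMatrix 𝕜 (ι e.1) e.2
  simp [incidenceVector_graphFinset_apply, PEquiv.toMatrix_apply, Equiv.toPEquiv_apply, eq_comm]

end IsFractionalMatching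

end FractionalMatching

section PerfectDDM

theorem le_dist_of_modEq_of_ne {d a b : ℕ} (h : a ≡ b [MOD d]) (hab : a ≠ b) :
    d ≤ Nat.dist a b := by
  wlog hlt : a < b generalizing a b
  · rw [Nat.dist_comm]
    exact this h.symm hab.symm (by omega)
  rw [Nat.dist_eq_sub_of_le hlt.le]
  exact Nat.le_of_dvd (Nat.sub_pos_of_lt hlt) ((Nat.modEq_iff_dvd' hlt.le).1 h)

theorem perfectDDM_graphFinset {n d : ℕ} {T : Type*} [DecidableEq T] [Fintype T]
    {E : Finset (Fin n × T)} {f : Fin n → T} (hE : graphFinset f ⊆ E)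
    (hf : ∀ i j, f i = f j → (i : ℕ) ≡ j [MOD d]) : PerfectDDM d E (graphFinset f) := by
  simp only [PerfectDDM, mem_graphFinset, Prod.forall]
  refine ⟨hE, ?_, ?_, fun i => ⟨f i, rfl⟩⟩
  · rintro i _ rfl _ _ rfl rfl
    rfl
  · rintro i _ rfl j _ rfl hij hne
    exact le_dist_of_modEq_of_ne (hf i j hij) fun h => hne (by rw [Fin.ext h])

end PerfectDDM

namespace FeasLP2

variable {n d : ℕ} {T : Type*} [DecidableEq T] {E : Finset (Fin n × T)} {x : Fin n × T → ℝ}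

theorem support_subset (hx : FeasLP2 d E x) : x.support ⊆ E :=
  fun e he => by_contra fun heE => he (hx.2.1 e heE)

theorem sum_filter_edges (hx : FeasLP2 d E x) {p : Fin n × T → Prop} [DecidablePred p]
    {A : Finset (Fin n)} {B : Finset T} (hp : ∀ e, p e ↔ e.1 ∈ A ∧ e.2 ∈ B) :
    ∑ e ∈ E with p e, x e = ∑ i ∈ A, ∑ t ∈ B, x (i, t) := by
  rw [← sum_product']
  refine sum_subset (fun e he => mem_product.2 ((hp e).1 (mem_filter.1 he).2)) ?_
  exact fun e heAB he => hx.2.1 e fun heE => he (mem_filter.2 ⟨heE, (hp e).2 (mem_product.1 heAB)⟩)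

theorem row_sum [Fintype T] (hx : FeasLP2 d E x) (s : Fin n) : ∑ t, x (s, t) = 1 := by
  rw [← hx.2.2.1 s, hx.sum_filter_edges (A := {s}) (B := univ) (by simp), sum_singleton]

theorem window_sum_le (hx : FeasLP2 d E x) (s : Fin n) (t : T) :
    ∑ i : Fin n with s ≤ i ∧ (i : ℕ) < s + d, x (i, t) ≤ 1 := by
  have h := hx.2.2.2 s t
  rw [hx.sum_filter_edges (A := {i | s ≤ i ∧ (i : ℕ) < s + d}) (B := {t})
    (by simp [and_comm])] at h
  simpa only [sum_singleton] using h

variable [Fintype T]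

theorem isFractionalMatching_restrict (hx : FeasLP2 d E x) {W : Finset (Fin n)}
    (hW : ∀ i ∈ W, ∀ j ∈ W, (j : ℕ) < i + d) :
    IsFractionalMatching fun e : W × T => x (e.1, e.2) where
  nonneg e := hx.1 _
  row_sum i := hx.row_sum i
  col_sum_le t := by
    rw [sum_coe_sort W fun i => x (i, t)]
    rcases W.eq_empty_or_nonempty with rfl | hne
    · simp
    · have hsub : W ⊆ ({i | W.min' hne ≤ i ∧ (i : ℕ) < W.min' hne + d} : Finset (Fin n)) :=
        fun i hi => by simpa using ⟨W.min'_le i hi, hW _ (W.min'_mem hne) i hi⟩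
      exact (sum_le_sum_of_subset_of_nonneg hsub fun i _ _ => hx.1 _).trans
        (hx.window_sum_le _ t)

theorem window_sum_eq_one (hx : FeasLP2 d E x) {W : Finset (Fin n)}
    (hW : ∀ i ∈ W, ∀ j ∈ W, (j : ℕ) < i + d) (hcard : Fintype.card T ≤ #W) (t : T) :
    ∑ i ∈ W, x (i, t) = 1 := by
  rw [← sum_coe_sort W fun i => x (i, t)]
  exact (hx.isFractionalMatching_restrict hW).col_sum_eq_one (by simpa using hcard) t

theorem apply_eq_of_val_eq_add (hx : FeasLP2 d E x) (hT : Fintype.card T ≤ d) {a b : Fin n}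
    (hab : (b : ℕ) = a + d) (t : T) : x (b, t) = x (a, t) := by
  have hle : a ≤ b := Fin.le_def.2 (by omega)
  have hIco : ∑ i ∈ Ico a b, x (i, t) = 1 :=
    hx.window_sum_eq_one (by simp only [mem_Ico, Fin.le_def, Fin.lt_def]; omega)
      (by rw [Fin.card_Ico]; omega) t
  have hIoc : ∑ i ∈ Ioc a b, x (i, t) = 1 :=
    hx.window_sum_eq_one (by simp only [mem_Ioc, Fin.le_def, Fin.lt_def]; omega)
      (by rw [Fin.card_Ioc]; omega) t
  have hIcc := (sum_Ico_add_eq_sum_Icc (f := fun i => x (i, t)) hle).trans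
    (sum_Ioc_add_eq_sum_Icc hle).symm
  rw [hIco, hIoc] at hIcc
  exact add_left_cancel hIcc

theorem pos_of_card_le (hx : FeasLP2 d E x) (hT : Fintype.card T ≤ d) (s : Fin n) : 0 < d := by
  have : Nonempty T := by
    by_contra hempty
    simpa [not_nonempty_iff.1 hempty] using hx.row_sum s
  exact Fintype.card_pos.trans_le hT

theorem apply_eq_of_val_eq_mod (hx : FeasLP2 d E x) (hT : Fintype.card T ≤ d) {a b : Fin n}
    (hab : (a : ℕ) = b % d) (t : T) : x (b, t) = x (a, t) := by
  have hd : 0 < d := hx.pos_of_card_le hT a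
  obtain ⟨b, hb⟩ := b
  induction b using Nat.strong_induction_on with
  | _ b ih =>
    rcases lt_or_ge b d with hlt | hge
    · rw [show a = ⟨b, hb⟩ from Fin.ext (by simpa [Nat.mod_eq_of_lt hlt] using hab)]
    · rw [hx.apply_eq_of_val_eq_add hT (a := ⟨b - d, by omega⟩) (by simp [hge])]
      exact ih (b - d) (by omega) (by omega) (by simpa [Nat.mod_eq_sub_mod hge] using hab)

theorem mem_convexHull (hx : FeasLP2 d E x) (hT : Fintype.card T ≤ d) :
    x ∈ convexHull ℝ (incidenceVector ℝ '' {M | PerfectDDM d E M}) := by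
  let W : Finset (Fin n) := {i | (i : ℕ) < d}
  let ρ (s : Fin n) : W := ⟨⟨s % d, (Nat.mod_le s d).trans_lt s.2⟩,
    by simpa [W] using Nat.mod_lt s (hx.pos_of_card_le hT s)⟩
  have hW : ∀ i ∈ W, ∀ j ∈ W, (j : ℕ) < i + d := by
    simp only [W, mem_filter_univ]
    omega
  have hperiodic : LinearMap.funLeft ℝ ℝ (Prod.map ρ id) (fun e : W × T => x (e.1, e.2)) = x :=
    funext fun e => (hx.apply_eq_of_val_eq_mod hT rfl e.2).symm
  have hmem := Set.mem_image_of_mem (LinearMap.funLeft ℝ ℝ (Prod.map ρ id))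
    (hx.isFractionalMatching_restrict hW).mem_convexHull_embedding
  rw [hperiodic, LinearMap.image_convexHull, ← Set.range_comp] at hmem
  simp only [Function.comp_def, funLeft_incidenceVector_graphFinset] at hmem
  refine convexHull_mono ?_ (mem_convexHull_support_subset ?_ hmem)
  · rintro _ ⟨⟨f, rfl⟩, hsupp⟩
    rw [support_incidenceVector] at hsupp
    refine ⟨_, perfectDDM_graphFinset (mod_cast hsupp.trans hx.support_subset) ?_, rfl⟩
    exact fun i j hij => congrArg (fun i : W => (i : ℕ)) (f.injective hij)
  · rintro _ ⟨f, rfl⟩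
    exact incidenceVector_nonneg ℝ _

theorem exists_perfectDDM_weight_ge (hx : FeasLP2 d E x) (hT : Fintype.card T ≤ d)
    (w : Fin n × T → ℝ) : ∃ M, PerfectDDM d E M ∧ ∑ e ∈ E, w e * x e ≤ ∑ e ∈ M, w e := by
  let weight : (Fin n × T → ℝ) →ₗ[ℝ] ℝ := ∑ e ∈ E, w e • LinearMap.proj e
  have weight_apply (y) : weight y = ∑ e ∈ E, w e * y e := by simp [weight]
  obtain ⟨_, ⟨M, hM, rfl⟩, hle⟩ := (weight.convexOn convex_univ).exists_ge_of_mem_convexHull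
    (Set.subset_univ _) (hx.mem_convexHull hT)
  exact ⟨M, hM, by simpa only [weight_apply, sum_mul_incidenceVector hM.1] using hle⟩

end FeasLP2

theorem stmt9_general {n d : ℕ} {T : Type*} [DecidableEq T] [Fintype T]
    (hT : Fintype.card T ≤ d) (E : Finset (Fin n × T)) (w : Fin n × T → ℝ)
    (hfeas : ∃ x, FeasLP2 d E x) :
    ∃ M, PerfectDDM d E M ∧
      ∀ x, FeasLP2 d E x → ∑ e ∈ E, w e * x e ≤ ∑ e ∈ M, w e := by
  obtain ⟨x₀, hx₀⟩ := hfeas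
  obtain ⟨M₀, hM₀, -⟩ := hx₀.exists_perfectDDM_weight_ge hT w
  obtain ⟨M, hM, hmax⟩ := Set.exists_max_image {M | PerfectDDM d E M} (fun M => ∑ e ∈ M, w e)
    (Set.toFinite _) ⟨M₀, hM₀⟩
  refine ⟨M, hM, fun x hx => ?_⟩
  obtain ⟨M', hM', hle⟩ := hx.exists_perfectDDM_weight_ge hT w
  exact hle.trans (hmax M' hM')

/-- If `d = |T|`, then LP2 is integral: for every weight function, whenever LP2 is
feasible its optimum is attained at (the characteristic vector of) a perfect
`d`-distance matching. -/
theorem stmt9 {n : ℕ} {T : Type*} [DecidableEq T] [Fintype T]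
    (d : ℕ) (hd : 1 ≤ d) (hdT : d = Fintype.card T) (E : Finset (Fin n × T)) :
    ∀ w : Fin n × T → ℝ, (∃ x, FeasLP2 d E x) →
      ∃ M, PerfectDDM d E M ∧
        ∀ x, FeasLP2 d E x → ∑ e ∈ E, w e * x e ≤ ∑ e ∈ M, w e :=
  fun w => stmt9_general hdT.ge E w
end
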